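/- Every 2-edge-connected finite simple graph G has a spanning tree T such that every vertex v satisfies deg_T(v) ≤ ⌈deg_G(v)/2⌉ + 1. -/

import Mathlib

/-!
Write `d` for the degree in `G` and `i(X)` for the number of edges with both ends in `X`, and fix a
root `r`. The tree is found inside an orientation of `G` in which every vertex has out-degree at
most `⌈d(v)/2⌉` and every vertex is reachable from `r`: an arborescence rooted at `r` in such an
orientation uses at most one arc into `v` and at most `⌈d(v)/2⌉` arcs out of `v`.

The orientation is determined by its in-degrees `m`. Let `h(X) = i(X) + 1` if `X` is nonempty and
avoids `r`, and `h(X) = i(X)` otherwise. If `m(X) ≥ h(X)` for all `X` and `m(V) = |E|`, then Hall's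
theorem gives an orientation with in-degrees `m` (`exists_orientation`). Every nonempty `X` avoiding
`r` is then entered by an arc, because more than `i(X)` arcs have their head in `X`; hence every
vertex is reachable from `r`.

To get such an `m` with also `m(v) ≥ ⌊d(v)/2⌋` (`exists_indegrees`), take `m` of minimal total
subject to `m ≥ h` and the lower bounds; `m = d` is admissible. By minimality every vertex either
attains its lower bound or lies in a tight set, one with `m(X) = h(X)`. The function `h` is
supermodular on intersecting pairs, so the union of two intersecting tight sets is tight, and the
maximal tight sets together with the remaining singletons partition `V`. Every cut has at least two
edges, so `2 h(X) ≤ d(X)` (`two_mul_demand_le`), and summing over the partition gives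
`2 m(V) ≤ d(V) = 2 |E|`.
-/

/-- A finite simple graph is 2-edge-connected if it has at least 2 vertices,
is connected, and deleting any single edge leaves it connected. -/
def TwoEdgeConnected {V : Type*} [Fintype V] (G : SimpleGraph V) : Prop :=
  2 ≤ Fintype.card V ∧ G.Connected ∧
    ∀ e ∈ G.edgeSet, (G.deleteEdges {e}).Connected

namespace LowDegreeTree

open Finset

variable {V : Type*}

lemma exists_cross {H : SimpleGraph V} (hH : H.Connected) {X : Finset V} {a b : V} (ha : a ∈ X)
    (hb : b ∉ X) : ∃ x y, x ∈ X ∧ y ∉ X ∧ H.Adj x y := by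
  obtain ⟨p⟩ := hH.preconnected a b
  obtain ⟨d, -, h1, h2⟩ := p.exists_boundary_dart (X : Set V) (by simpa using ha) (by simpa using hb)
  exact ⟨d.fst, d.snd, by simpa using h1, by simpa using h2, d.adj⟩

variable [Fintype V] [DecidableEq V]

/-- The edges of `G` with both ends in `X`. -/
def inner (G : SimpleGraph V) [DecidableRel G.Adj] (X : Finset V) : Finset (Sym2 V) :=
  {e ∈ G.edgeFinset | ∀ v ∈ e, v ∈ X}

/-- The demand `h(X)`: a lower bound for the number of arcs with head in `X`, in any orientation
of `G` in which every vertex is reachable from `r`. -/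
def demand (G : SimpleGraph V) [DecidableRel G.Adj] (r : V) (X : Finset V) : ℕ :=
  #(inner G X) + if X.Nonempty ∧ r ∉ X then 1 else 0

variable (G : SimpleGraph V) [DecidableRel G.Adj]

lemma inner_supermodular (X Y : Finset V) :
    #(inner G X) + #(inner G Y) ≤ #(inner G (X ∪ Y)) + #(inner G (X ∩ Y)) := by
  rw [← card_union_add_card_inter]
  apply Nat.add_le_add
  · apply card_le_card
    intro e
    simp only [inner, mem_union, mem_filter]
    rintro (⟨h, h'⟩ | ⟨h, h'⟩)
    · exact ⟨h, fun v hv => Or.inl (h' v hv)⟩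
    · exact ⟨h, fun v hv => Or.inr (h' v hv)⟩
  · apply card_le_card
    intro e
    simp only [inner, mem_inter, mem_filter]
    rintro ⟨⟨h, h1⟩, -, h2⟩
    exact ⟨h, fun v hv => ⟨h1 v hv, h2 v hv⟩⟩

lemma demand_supermodular (r : V) (X Y : Finset V) (hXY : (X ∩ Y).Nonempty) :
    demand G r X + demand G r Y ≤ demand G r (X ∪ Y) + demand G r (X ∩ Y) := by
  have h := inner_supermodular G X Y
  have hX : X.Nonempty := hXY.mono inter_subset_left
  have hY : Y.Nonempty := hXY.mono inter_subset_right
  have hU : (X ∪ Y).Nonempty := hX.mono subset_union_left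
  simp only [demand, hX, hY, hU, hXY, true_and, mem_union, mem_inter]
  by_cases h1 : r ∈ X <;> by_cases h2 : r ∈ Y <;> simp [h1, h2] <;> omega

lemma sum_degree_eq (X : Finset V) :
    ∑ v ∈ X, G.degree v = ∑ e ∈ G.edgeFinset, #{v ∈ X | v ∈ e} := by
  have : ∀ v ∈ X, G.degree v = #{e ∈ G.edgeFinset | v ∈ e} := by
    intro v _
    rw [← G.card_incidenceFinset_eq_degree, G.incidenceFinset_eq_filter]
  rw [sum_congr rfl this]
  exact sum_card_bipartiteAbove_eq_sum_card_bipartiteBelow _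

/-- The degree sum over `X` is twice the number of inner edges plus the number of edges leaving
`X`; here the latter is bounded below by the size of a given set `C` of leaving edges. -/
lemma two_mul_inner_add_le (X : Finset V) (C : Finset (Sym2 V))
    (hC : ∀ e ∈ C, ∃ x y, x ∈ X ∧ y ∉ X ∧ G.Adj x y ∧ e = s(x, y)) :
    2 * #(inner G X) + #C ≤ ∑ v ∈ X, G.degree v := by
  rw [sum_degree_eq]
  have hd : Disjoint (inner G X) C := by
    rw [disjoint_left]
    intro e he heC
    obtain ⟨x, y, hx, hy, -, rfl⟩ := hC e heC
    exact hy ((mem_filter.1 he).2 y (by simp))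
  have hsub : inner G X ∪ C ⊆ G.edgeFinset := by
    apply union_subset (filter_subset _ _)
    intro e he
    obtain ⟨x, y, hx, hy, h, rfl⟩ := hC e he
    simpa using h
  refine le_trans ?_ (sum_le_sum_of_subset hsub)
  rw [sum_union hd]
  apply Nat.add_le_add
  · rw [mul_comm, ← smul_eq_mul]
    apply card_nsmul_le_sum
    intro e he
    obtain ⟨he, h⟩ := mem_filter.1 he
    induction e with | _ x y =>
    have hxy : x ≠ y := by
      have : G.Adj x y := by simpa using he
      exact this.ne
    rw [← card_pair hxy]
    apply card_le_card
    intro v hv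
    have hv' : v ∈ s(x, y) := by simpa using hv
    exact mem_filter.2 ⟨h v hv', hv'⟩
  · rw [card_eq_sum_ones]
    apply sum_le_sum
    intro e he
    obtain ⟨x, y, hx, hy, h, rfl⟩ := hC e he
    exact card_pos.2 ⟨x, by simp [hx]⟩

/-- This is where 2-edge-connectivity enters: a nonempty proper `X` is left by at least two
edges, which pays for the extra `1` in the demand. -/
lemma two_mul_demand_le (hG : TwoEdgeConnected G) (r : V) (X : Finset V) :
    2 * demand G r X ≤ ∑ v ∈ X, G.degree v := by
  obtain ⟨-, hc, hdel⟩ := hG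
  unfold demand
  split_ifs with h
  · obtain ⟨⟨a, ha⟩, hr⟩ := h
    obtain ⟨x, y, hx, hy, hxy⟩ := exists_cross hc ha hr
    obtain ⟨x', y', hx', hy', hxy'⟩ := exists_cross (hdel s(x, y) (by simpa using hxy)) ha hr
    rw [SimpleGraph.deleteEdges_adj] at hxy'
    have hne : s(x, y) ≠ s(x', y') := fun h => hxy'.2 (by simp [h])
    have := two_mul_inner_add_le G X {s(x, y), s(x', y')} (by
      intro e he
      rw [mem_insert, mem_singleton] at he
      rcases he with rfl | rfl
      · exact ⟨x, y, hx, hy, hxy, rfl⟩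
      · exact ⟨x', y', hx', hy', hxy'.1, rfl⟩)
    rw [card_pair hne] at this
    omega
  · simpa using two_mul_inner_add_le G X ∅ (by simp)

/-- If the sets satisfying `Good` cover `V` and the union of two intersecting ones is again one,
then the maximal ones partition `V`, so an inequality of sums over each of them is inherited by
the sums over `V`. -/
lemma sum_le_sum_of_cover (f g : V → ℕ) (Good : Finset V → Prop)
    (hcov : ∀ v, ∃ T, Good T ∧ v ∈ T)
    (hunion : ∀ S T, Good S → Good T → (S ∩ T).Nonempty → Good (S ∪ T))
    (hle : ∀ T, Good T → ∑ v ∈ T, f v ≤ ∑ v ∈ T, g v) :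
    ∑ v, f v ≤ ∑ v, g v := by
  classical
  set F : Finset (Finset V) := {T | Maximal Good T} with hF
  have hdisj : (F : Set (Finset V)).PairwiseDisjoint id := by
    intro S hS T hT hne
    have hS : Maximal Good S := by simpa [hF] using hS
    have hT : Maximal Good T := by simpa [hF] using hT
    by_contra hd
    have hi : (S ∩ T).Nonempty := not_disjoint_iff_nonempty_inter.1 hd
    have hU := hunion S T hS.prop hT.prop hi
    exact hne ((hS.eq_of_le hU subset_union_left).trans
      (hT.eq_of_le hU subset_union_right).symm)
  have huniv : F.biUnion id = univ := by
    ext v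
    simp only [mem_biUnion, mem_univ, iff_true]
    obtain ⟨T, hT, hv⟩ := hcov v
    obtain ⟨S, hTS, hS⟩ := (Set.toFinite {T | Good T}).exists_le_maximal hT
    exact ⟨S, by simpa [hF] using hS, hTS hv⟩
  rw [← huniv, sum_biUnion hdisj, sum_biUnion hdisj]
  exact sum_le_sum fun T hT => hle T (by
    have : Maximal Good T := by simpa [hF] using hT
    exact this.prop)

lemma exists_indegrees (hG : TwoEdgeConnected G) (r : V) :
    ∃ m : V → ℕ, (∀ X, demand G r X ≤ ∑ v ∈ X, m v) ∧ (∀ v, G.degree v / 2 ≤ m v) ∧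
      ∑ v, m v ≤ #G.edgeFinset := by
  classical
  let P : (V → ℕ) → Prop := fun m =>
    (∀ X, demand G r X ≤ ∑ v ∈ X, m v) ∧ (∀ v, G.degree v / 2 ≤ m v)
  have hex : ∃ n, ∃ m, P m ∧ ∑ v, m v = n :=
    ⟨_, fun v => G.degree v, ⟨fun X => by have := two_mul_demand_le G hG r X; dsimp only; omega,
      fun v => Nat.div_le_self _ _⟩, rfl⟩
  obtain ⟨m, hm, hsum⟩ := Nat.find_spec hex
  have hmin : ∀ m', P m' → ∑ v, m v ≤ ∑ v, m' v := fun m' h' => by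
    rw [hsum]; exact Nat.find_min' hex ⟨m', h', rfl⟩
  refine ⟨m, hm.1, hm.2, ?_⟩
  have htight : ∀ v, G.degree v / 2 < m v → ∃ X, ∑ u ∈ X, m u = demand G r X ∧ v ∈ X := by
    intro v hv
    by_contra! hno
    have key : ∀ X, v ∈ X →
        ∑ u ∈ X, Function.update m v (m v - 1) u + 1 = ∑ u ∈ X, m u := by
      intro X hX
      rw [sum_update_of_mem hX, ← add_sum_erase X m hX, sdiff_singleton_eq_erase]
      omega
    have := hmin (Function.update m v (m v - 1)) ⟨fun X => ?_, fun u => ?_⟩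
    · have := key univ (mem_univ v)
      omega
    · by_cases hX : v ∈ X
      · have h1 := key X hX
        have h2 := hm.1 X
        have h3 : ∑ u ∈ X, m u ≠ demand G r X := fun h => hno X h hX
        omega
      · rw [sum_update_of_notMem hX]
        exact hm.1 X
    · by_cases hu : u = v
      · subst hu; simp; omega
      · simpa [hu] using hm.2 u
  have h2 : ∑ v, 2 * m v ≤ ∑ v, G.degree v := by
    apply sum_le_sum_of_cover _ _ fun T =>
      (∑ u ∈ T, m u = demand G r T) ∨ ∃ v, T = {v} ∧ m v = G.degree v / 2
    · intro v
      rcases (hm.2 v).eq_or_lt with h | h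
      · exact ⟨{v}, Or.inr ⟨v, rfl, h.symm⟩, mem_singleton_self v⟩
      · obtain ⟨X, h1, h2⟩ := htight v h
        exact ⟨X, Or.inl h1, h2⟩
    · rintro S T hS hT hne
      rcases hS with hS | ⟨v, rfl, hv⟩
      · rcases hT with hT | ⟨v, rfl, hv⟩
        · left
          have h1 := demand_supermodular G r S T hne
          have h2 := hm.1 (S ∪ T)
          have h3 := hm.1 (S ∩ T)
          have h4 := sum_union_inter (s₁ := S) (s₂ := T) (f := m)
          omega
        · left
          have : v ∈ S := by
            obtain ⟨x, hx⟩ := hne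
            simp only [mem_inter, mem_singleton] at hx
            exact hx.2 ▸ hx.1
          rwa [union_eq_left.2 (singleton_subset_iff.2 this)]
      · have : v ∈ T := by
          obtain ⟨x, hx⟩ := hne
          simp only [mem_inter, mem_singleton] at hx
          exact hx.1 ▸ hx.2
        rw [union_eq_right.2 (singleton_subset_iff.2 this)]
        exact hT
    · rintro T (hT | ⟨v, rfl, hv⟩)
      · rw [← mul_sum, hT]
        exact two_mul_demand_le G hG r T
      · simp only [sum_singleton]
        omega
  rw [← mul_sum, G.sum_degrees_eq_twice_card_edges] at h2
  omega

/-- Hakimi's orientation theorem: an orientation, encoded by the head of each edge, with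
prescribed in-degrees `m`. -/
lemma exists_orientation (m : V → ℕ) (hm : ∀ X, #(inner G X) ≤ ∑ v ∈ X, m v)
    (hE : ∑ v, m v ≤ #G.edgeFinset) :
    ∃ head : Sym2 V → V, (∀ e ∈ G.edgeFinset, head e ∈ e) ∧
      ∀ v, #{e ∈ G.edgeFinset | head e = v} = m v := by
  classical
  -- Hall's theorem matches the edges to their ends, with `m v` copies of each vertex `v`.
  let t : G.edgeFinset → Finset (Σ v, Fin (m v)) := fun e =>
    ({v | v ∈ e.1} : Finset V).sigma fun _ => univ
  have hall : ∀ s : Finset G.edgeFinset, #s ≤ #(s.biUnion t) := by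
    intro s
    set X : Finset V := {v | ∃ e ∈ s, v ∈ e.1} with hX
    have h1 : #s ≤ #(inner G X) := by
      rw [← card_map (Function.Embedding.subtype _)]
      apply card_le_card
      intro e he
      obtain ⟨e', he', rfl⟩ := mem_map.1 he
      refine mem_filter.2 ⟨e'.2, fun v hv => ?_⟩
      simp only [hX, mem_filter, mem_univ, true_and]
      exact ⟨e', he', hv⟩
    have h2 : s.biUnion t = X.sigma fun _ => univ := by
      ext ⟨v, k⟩
      simp [t, hX]
    rw [h2, card_sigma]
    simpa using h1.trans (hm X)
  obtain ⟨f, hf, hft⟩ := (Finset.all_card_le_biUnion_card_iff_exists_injective t).1 hall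
  have hle : ∀ v, #{e : G.edgeFinset | (f e).1 = v} ≤ m v := by
    intro v
    have : #({e : G.edgeFinset | (f e).1 = v}) ≤
        #(({v} : Finset V).sigma fun v => (univ : Finset (Fin (m v)))) := by
      apply card_le_card_of_injOn f
      · intro e he
        simpa using he
      · exact hf.injOn
    simpa [card_sigma] using this
  have hcard : #G.edgeFinset = ∑ v, #{e : G.edgeFinset | (f e).1 = v} := by
    rw [← card_eq_sum_card_fiberwise (f := fun e => (f e).1) (fun _ _ => mem_coe.2 (mem_univ _))]
    simp
  have heq : ∀ v, #{e : G.edgeFinset | (f e).1 = v} = m v := by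
    have h := (sum_eq_sum_iff_of_le (s := univ) fun v _ => hle v).1
      (le_antisymm (sum_le_sum fun v _ => hle v) (hcard ▸ hE))
    exact fun v => h v (mem_univ v)
  refine ⟨fun e => if h : e ∈ G.edgeFinset then (f ⟨e, h⟩).1 else e.out.1, ?_, ?_⟩
  · intro e he
    have := hft ⟨e, he⟩
    simp only [he, dif_pos]
    simpa [t] using this
  · intro v
    rw [← heq v, ← card_map (Function.Embedding.subtype _)]
    congr 1
    ext e
    simp only [mem_filter, mem_map, mem_univ, true_and, Function.Embedding.subtype_apply]
    constructor
    · rintro ⟨he, h⟩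
      refine ⟨⟨e, he⟩, ?_, rfl⟩
      simpa only [he, dif_pos] using h
    · rintro ⟨e', h, rfl⟩
      refine ⟨e'.2, ?_⟩
      simpa only [e'.2, dif_pos] using h

/-- If every nonempty set avoiding `r` is entered by an arc of `D`, then `D` contains a spanning
arborescence rooted at `r`. It is encoded by a parent function `p`, whose value at `r` is
irrelevant, and by the depth `ℓ` in a breadth-first search, which decreases along `p`. -/
lemma exists_parent (D : V → V → Prop) (r : V)
    (hD : ∀ X : Finset V, X.Nonempty → r ∉ X → ∃ u v, u ∉ X ∧ v ∈ X ∧ D u v) :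
    ∃ (p : V → V) (ℓ : V → ℕ), ∀ v, v ≠ r → D (p v) v ∧ ℓ (p v) < ℓ v := by
  classical
  let lev : ℕ → Set V := fun n => Nat.rec (motive := fun _ => Set V) {r} (fun _ S => S ∪ {v | ∃ u ∈ S, D u v}) n
  have hsucc : ∀ n, lev (n + 1) = lev n ∪ {v | ∃ u ∈ lev n, D u v} := fun _ => rfl
  have hall : ∀ v, ∃ n, v ∈ lev n := by
    by_contra! hno
    obtain ⟨w, hw⟩ := hno
    obtain ⟨u, v, hu, hv, huv⟩ := hD {v | ∀ n, v ∉ lev n} ⟨w, by simpa using hw⟩ (by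
      simp only [mem_filter, mem_univ, true_and, not_forall, not_not]
      exact ⟨0, rfl⟩)
    simp only [mem_filter, mem_univ, true_and, not_forall, not_not] at hu hv
    obtain ⟨n, hn⟩ := hu
    exact hv (n + 1) (hsucc n ▸ Or.inr ⟨u, hn, huv⟩)
  have hpar : ∀ v, ∃ u, v ≠ r → D u v ∧ Nat.find (hall u) < Nat.find (hall v) := by
    intro v
    by_cases hv : v = r
    · exact ⟨v, fun h => absurd hv h⟩
    obtain ⟨k, hk⟩ : ∃ k, Nat.find (hall v) = k + 1 := by
      apply Nat.exists_eq_succ_of_ne_zero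
      intro h
      exact hv (show v ∈ lev 0 from h ▸ Nat.find_spec (hall v))
    have h1 : v ∈ lev (k + 1) := hk ▸ Nat.find_spec (hall v)
    have h2 : v ∉ lev k := Nat.find_min (hall v) (by omega)
    rw [hsucc] at h1
    obtain ⟨u, hu, huv⟩ := h1.resolve_left h2
    have := Nat.find_min' (hall u) hu
    exact ⟨u, fun _ => ⟨huv, by omega⟩⟩
  choose p hp using hpar
  exact ⟨p, fun v => Nat.find (hall v), hp⟩

end LowDegreeTree

open LowDegreeTree Finset in
/-- Every 2-edge-connected finite simple graph `G` has a spanning tree `T`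
such that every vertex `v` satisfies `deg_T(v) ≤ ⌈deg_G(v)/2⌉ + 1`. -/
theorem low_degree_spanning_tree {V : Type*} [Fintype V] [DecidableEq V]
    (G : SimpleGraph V) [DecidableRel G.Adj] (hG : TwoEdgeConnected G) :
    ∃ T : SimpleGraph V, T ≤ G ∧ T.IsTree ∧
      ∀ v : V, (T.neighborSet v).ncard ≤ (G.degree v + 1) / 2 + 1 := by
  obtain ⟨r⟩ := hG.2.1.nonempty
  obtain ⟨m, hm, hlow, hE⟩ := exists_indegrees G hG r
  obtain ⟨head, hhead, hin⟩ := exists_orientation G m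
    (fun X => (Nat.le_add_right _ _).trans (hm X)) hE
  obtain ⟨p, ℓ, hp⟩ := exists_parent (fun u v => G.Adj u v ∧ head s(u, v) = v) r (by
    intro X hX hr
    have h1 : #(inner G X) < #{e ∈ G.edgeFinset | head e ∈ X} := by
      have h2 := hm X
      rw [demand, if_pos ⟨hX, hr⟩] at h2
      rw [card_eq_sum_card_fiberwise (s := {e ∈ G.edgeFinset | head e ∈ X}) (f := head) (t := X)
        (fun e he => (mem_filter.1 (mem_coe.1 he)).2)]
      refine lt_of_lt_of_le (Nat.lt_of_succ_le h2) (sum_le_sum fun v hv => ?_)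
      rw [← hin v]
      apply card_le_card
      intro e
      simp only [mem_filter]
      rintro ⟨h, rfl⟩
      exact ⟨⟨h, hv⟩, rfl⟩
    obtain ⟨e, he, hne⟩ := exists_mem_notMem_of_card_lt_card h1
    obtain ⟨he, heX⟩ := mem_filter.1 he
    obtain ⟨u, hu⟩ := hhead e he
    refine ⟨u, head e, ?_, heX, ?_, ?_⟩
    · intro huX
      refine hne (mem_filter.2 ⟨he, fun v hv => ?_⟩)
      rw [hu, Sym2.mem_iff] at hv
      rcases hv with rfl | rfl
      · exact heX
      · exact huX
    · rw [SimpleGraph.mem_edgeFinset, hu, SimpleGraph.mem_edgeSet] at he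
      exact he.symm
    · rw [Sym2.eq_swap, ← hu])
  -- The arborescence as an undirected graph.
  let H : SimpleGraph V := SimpleGraph.fromRel fun u v => v ≠ r ∧ p v = u
  have hHp : ∀ v, v ≠ r → H.Adj (p v) v := fun v hv =>
    (SimpleGraph.fromRel_adj _ _ _).2 ⟨(hp v hv).1.1.ne, Or.inl ⟨hv, rfl⟩⟩
  have hreach : ∀ n v, ℓ v = n → H.Reachable r v := by
    intro n
    induction n using Nat.strong_induction_on with
    | _ n ih =>
      intro v hv
      by_cases hvr : v = r
      · rw [hvr]
      · exact (ih _ (hv ▸ (hp v hvr).2) _ rfl).trans (hHp v hvr).reachable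
  have hconn : H.Connected :=
    { preconnected := fun u v => (hreach _ u rfl).symm.trans (hreach _ v rfl)
      nonempty := ⟨r⟩ }
  obtain ⟨T, hTH, hT⟩ := hconn.exists_isTree_le
  refine ⟨T, fun u v h => ?_, hT, fun v => ?_⟩
  · obtain ⟨-, ⟨hr, rfl⟩ | ⟨hr, rfl⟩⟩ := (SimpleGraph.fromRel_adj _ _ _).1 (hTH h)
    · exact (hp v hr).1.1
    · exact (hp u hr).1.1.symm
  · have hsub : T.neighborSet v ⊆
        (insert (p v) {w ∈ G.neighborFinset v | head s(v, w) = w} : Finset V) := by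
      intro w hw
      rw [mem_coe, mem_insert, mem_filter, SimpleGraph.mem_neighborFinset]
      obtain ⟨-, ⟨h, rfl⟩ | ⟨h, rfl⟩⟩ := (SimpleGraph.fromRel_adj _ _ _).1 (hTH hw)
      · exact Or.inr (hp w h).1
      · exact Or.inl rfl
    have h1 := (Set.ncard_le_ncard hsub (finite_toSet _)).trans_eq (Set.ncard_coe_finset _)
    have h2 := h1.trans (card_insert_le _ _)
    have h3 := card_filter_add_card_filter_not (s := G.neighborFinset v)
      (fun w => head s(v, w) = w)
    rw [SimpleGraph.card_neighborFinset_eq_degree] at h3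
    have h4 : m v ≤ #{w ∈ G.neighborFinset v | ¬ head s(v, w) = w} := by
      rw [← hin v]
      refine (card_le_card (t := image (fun w => s(v, w)) _) ?_).trans card_image_le
      intro e he
      obtain ⟨he, hv⟩ := mem_filter.1 he
      obtain ⟨u, hu⟩ := hv ▸ hhead e he
      have hadj : G.Adj v u := by
        rwa [SimpleGraph.mem_edgeFinset, hu, SimpleGraph.mem_edgeSet] at he
      refine mem_image.2 ⟨u, mem_filter.2 ⟨by simpa using hadj, ?_⟩, hu.symm⟩
      rw [← hu, hv]
      exact hadj.ne
    have h5 := hlow v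
    omega
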